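/- (Strict length reduction, univariate case.) Let ℓ, u : [0,1] → K be bounded measurable with ℓ ≤ u. Suppose there exist sets X₀, X₀' ⊂ [0,1], each of measure at least δ > 0, with x' > x for all x ∈ X₀, x' ∈ X₀', and such that either (i) ℓ(x) > ℓ(x') + ε and u(x') > u(x) + ε for all such x, x', or (ii) ℓ(x') > ℓ(x) + ε and u(x) > u(x') + ε, for some ε > 0. Then for every p ∈ (1,∞), ∫₀¹ |u*(x) − ℓ*(x)|^p dx ≤ ∫₀¹ |u(x) − ℓ(x)|^p dx − δ·η_p, where η_p = inf { |v−t'|^p + |v'−t|^p − |v−t|^p − |v'−t'|^p : v,v',t,t' ∈ K, v' ≥ v+ε, t' ≥ t+ε } > 0. -/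

import Mathlib

/-!
The proof is by Kantorovich duality for the cost `|x - y| ^ p` on the line. For the monotone map
`T` transporting the law of `u` to the law of `l` there are explicit potentials `φ = potFst` and
`ψ = potSnd` with `φ x + ψ y ≤ |x - y| ^ p` (`potentials_le_cost`), and equality holds at the
points `(u* r, l* r)`, which lie on the filled graph of `T` (`potentials_eq_cost_rearr`).
Since `u` and `u*`, and likewise `l` and `l*`, are equimeasurable (`map_rearr`), the reduction in
length equals the integral over `[0,1]` of the duality gap
`g x = |u x - l x| ^ p - φ (u x) - ψ (l x) ≥ 0`.

If `x`, `x'` form a crossing pair, applying the dual inequality to `(u x, l x')` and `(u x', l x)`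
gives `g x + g x' ≥ η_p`. As such pairs fill the product of two disjoint sets of measure at least
`δ`, the integral of `g` is at least `δ * η_p` (`mul_le_integral_of_pairs`). The sets given may be
non-measurable, but they sit inside measurable sets defined by thresholds on `l` and `u` that
still consist of crossing pairs.

Positivity of `η_p`: it is the minimum of a compact set (`isCompact_uncrossGains`) of numbers that
are positive by the strict Monge property of the cost (`cost_uncross_lt`).
-/

open MeasureTheory

/-- Increasing rearrangement of a function on [0,1]. -/
noncomputable def rearr (f : ℝ → ℝ) (x : ℝ) : ℝ :=
  sInf {y : ℝ | x ≤ (volume (Set.Icc (0:ℝ) 1 ∩ {u : ℝ | f u ≤ y})).toReal}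

open Set Filter Topology

/-! ### The cost and its dual potentials -/

/-- The derivative of the cost profile `z ↦ |z| ^ p`. -/
noncomputable def costDeriv (p z : ℝ) : ℝ := p * |z| ^ (p - 2) * z

lemma costDeriv_hasDerivAt {p : ℝ} (hp : 1 < p) (z : ℝ) :
    HasDerivAt (fun x : ℝ => |x| ^ p) (costDeriv p z) z :=
  hasDerivAt_abs_rpow z hp

lemma costDeriv_continuous {p : ℝ} (hp : 1 < p) : Continuous (costDeriv p) := by
  have h : ContDiff ℝ 1 (fun x : ℝ => ‖x‖ ^ p) := contDiff_norm_rpow hp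
  have h2 := h.continuous_deriv le_rfl
  have h3 : deriv (fun x : ℝ => ‖x‖ ^ p) = costDeriv p := by
    ext z
    exact (costDeriv_hasDerivAt hp z).deriv
  rwa [h3] at h2

lemma costDeriv_strictMono {p : ℝ} (hp : 1 < p) : StrictMono (costDeriv p) := by
  apply strictMono_of_odd_strictMonoOn_nonneg
  · intro x
    simp [costDeriv]
  · have key : ∀ x : ℝ, 0 ≤ x → costDeriv p x = p * x ^ (p - 1) := by
      intro x hx
      rcases hx.eq_or_lt with rfl | hx
      · simp [costDeriv, Real.zero_rpow (by linarith : p - 1 ≠ 0)]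
      · rw [costDeriv, abs_of_pos hx, mul_assoc, ← Real.rpow_add_one hx.ne']
        congr 2
        ring
    intro x hx y hy hxy
    rw [key x hx, key y hy]
    have := Real.rpow_lt_rpow hx hxy (by linarith : 0 < p - 1)
    have hp0 : 0 < p := by linarith
    gcongr

/-- Strict Monge property of the cost `|x - y| ^ p`: since `costDeriv` is strictly increasing,
`x ↦ |x - t| ^ p - |x - t'| ^ p` is strictly increasing for `t < t'`. -/
lemma cost_uncross_lt {p : ℝ} (hp : 1 < p) {v v' t t' : ℝ} (hv : v < v') (ht : t < t') :
    0 < |v - t'| ^ p + |v' - t| ^ p - |v - t| ^ p - |v' - t'| ^ p := by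
  have hd : ∀ x : ℝ, HasDerivAt (fun x : ℝ => |x - t| ^ p - |x - t'| ^ p)
      (costDeriv p (x - t) - costDeriv p (x - t')) x := fun x =>
    ((costDeriv_hasDerivAt hp (x - t)).comp_sub_const x t).sub
      ((costDeriv_hasDerivAt hp (x - t')).comp_sub_const x t')
  have hmono : StrictMono (fun x : ℝ => |x - t| ^ p - |x - t'| ^ p) := by
    apply strictMono_of_deriv_pos
    intro x
    rw [(hd x).deriv]
    exact sub_pos.2 (costDeriv_strictMono hp (by linarith))
  have := hmono hv
  simp only at this
  linarith

lemma costDeriv_intervalIntegrable {p : ℝ} (hp : 1 < p) {T : ℝ → ℝ} (hT : Monotone T)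
    (a b : ℝ) : IntervalIntegrable (fun z => costDeriv p (z - T z)) volume a b := by
  wlog hab : a ≤ b generalizing a b
  · exact (this b a (by linarith)).symm
  rw [intervalIntegrable_iff_integrableOn_Icc_of_le hab]
  have hmeas : Measurable (fun z => costDeriv p (z - T z)) :=
    (costDeriv_continuous hp).measurable.comp (measurable_id.sub hT.measurable)
  refine Measure.integrableOn_of_bounded (M := |costDeriv p (a - T b)| + |costDeriv p (b - T a)|)
    measure_Icc_lt_top.ne hmeas.aestronglyMeasurable ?_
  filter_upwards [ae_restrict_mem measurableSet_Icc] with z hz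
  have h1 := (costDeriv_strictMono hp).monotone
    (show a - T b ≤ z - T z by linarith [hz.1, hT hz.2])
  have h2 := (costDeriv_strictMono hp).monotone
    (show z - T z ≤ b - T a by linarith [hz.2, hT hz.1])
  rw [Real.norm_eq_abs, abs_le]
  constructor
  · linarith [neg_abs_le (costDeriv p (a - T b)), abs_nonneg (costDeriv p (b - T a))]
  · linarith [le_abs_self (costDeriv p (b - T a)), abs_nonneg (costDeriv p (a - T b))]

/-- Marginal excess of the cost over the first potential. -/
noncomputable def slack (p : ℝ) (T : ℝ → ℝ) (y z : ℝ) : ℝ :=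
  costDeriv p (z - y) - costDeriv p (z - T z)

/-- First Kantorovich potential attached to a monotone map `T`: its derivative at `z` is that of
`|· - T z| ^ p`. -/
noncomputable def potFst (p M : ℝ) (T : ℝ → ℝ) (x : ℝ) : ℝ :=
  ∫ z in (-M)..x, costDeriv p (z - T z)

/-- Second Kantorovich potential, the conjugate `y ↦ inf_x (|x - y| ^ p - potFst p M T x)` over
`[-M, M]`; because `slack p T y` changes sign only once, from negative to positive, the infimum
is obtained by integrating the negative part of the slack. -/
noncomputable def potSnd (p M : ℝ) (T : ℝ → ℝ) (y : ℝ) : ℝ :=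
  |(-M) - y| ^ p + ∫ z in (-M)..M, min 0 (slack p T y z)

lemma slack_intervalIntegrable {p : ℝ} (hp : 1 < p) {T : ℝ → ℝ} (hT : Monotone T) (y a b : ℝ) :
    IntervalIntegrable (slack p T y) volume a b :=
  (((costDeriv_continuous hp).comp (continuous_sub_right y)).intervalIntegrable a b).sub
    (costDeriv_intervalIntegrable hp hT a b)

lemma min_slack_intervalIntegrable {p : ℝ} (hp : 1 < p) {T : ℝ → ℝ} (hT : Monotone T)
    (y a b : ℝ) : IntervalIntegrable (fun z => min 0 (slack p T y z)) volume a b :=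
  ⟨(integrable_zero _ _ _).inf (slack_intervalIntegrable hp hT y a b).1,
    (integrable_zero _ _ _).inf (slack_intervalIntegrable hp hT y a b).2⟩

/-- The duality gap of the two potentials, as the integral of the negative part of the slack to
the right of `x` and of its positive part to the left. -/
lemma cost_sub_potentials {p : ℝ} (hp : 1 < p) {T : ℝ → ℝ} (hT : Monotone T) (M x y : ℝ) :
    |x - y| ^ p - potFst p M T x - potSnd p M T y =
      (∫ z in (-M)..x, (slack p T y z - min 0 (slack p T y z))) +
        ∫ z in x..M, -(min 0 (slack p T y z)) := by
  have hftc : ∫ z in (-M)..x, costDeriv p (z - y) = |x - y| ^ p - |(-M) - y| ^ p :=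
    intervalIntegral.integral_eq_sub_of_hasDerivAt (f := fun z => |z - y| ^ p)
      (fun z _ => (costDeriv_hasDerivAt hp (z - y)).comp_sub_const z y)
      (((costDeriv_continuous hp).comp (continuous_sub_right y)).intervalIntegrable _ _)
  have hs : ∫ z in (-M)..x, slack p T y z =
      (∫ z in (-M)..x, costDeriv p (z - y)) - potFst p M T x :=
    intervalIntegral.integral_sub
      (((costDeriv_continuous hp).comp (continuous_sub_right y)).intervalIntegrable _ _)
      (costDeriv_intervalIntegrable hp hT _ _)
  rw [intervalIntegral.integral_sub (slack_intervalIntegrable hp hT y _ _)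
      (min_slack_intervalIntegrable hp hT y _ _), intervalIntegral.integral_neg, hs, hftc, potSnd,
    ← intervalIntegral.integral_add_adjacent_intervals
      (min_slack_intervalIntegrable hp hT y (-M) x) (min_slack_intervalIntegrable hp hT y x M)]
  ring

lemma potentials_le_cost {p : ℝ} (hp : 1 < p) {T : ℝ → ℝ} (hT : Monotone T) {M x : ℝ}
    (hx : x ∈ Icc (-M) M) (y : ℝ) : potFst p M T x + potSnd p M T y ≤ |x - y| ^ p := by
  have h := cost_sub_potentials hp hT M x y
  have h1 : 0 ≤ ∫ z in (-M)..x, (slack p T y z - min 0 (slack p T y z)) :=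
    intervalIntegral.integral_nonneg hx.1 fun z _ => sub_nonneg.2 (min_le_right _ _)
  have h2 : 0 ≤ ∫ z in x..M, -(min 0 (slack p T y z)) :=
    intervalIntegral.integral_nonneg hx.2 fun z _ => neg_nonneg.2 (min_le_left _ _)
  linarith

/-- Complementary slackness: the duality gap vanishes at every point `(x, y)` of the (filled)
graph of `T`. -/
lemma potentials_eq_cost {p : ℝ} (hp : 1 < p) {T : ℝ → ℝ} (hT : Monotone T) {M x y : ℝ}
    (hx : x ∈ Icc (-M) M) (hlo : ∀ z < x, T z ≤ y) (hhi : ∀ z, x ≤ z → y ≤ T z) :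
    potFst p M T x + potSnd p M T y = |x - y| ^ p := by
  have h := cost_sub_potentials hp hT M x y
  have hpos : ∀ z, x ≤ z → 0 ≤ slack p T y z := fun z hz =>
    sub_nonneg.2 ((costDeriv_strictMono hp).monotone (by linarith [hhi z hz]))
  have hneg : ∀ z < x, slack p T y z ≤ 0 := fun z hz =>
    sub_nonpos.2 ((costDeriv_strictMono hp).monotone (by linarith [hlo z hz]))
  have h1 : ∫ z in (-M)..x, (slack p T y z - min 0 (slack p T y z)) = 0 := by
    rw [intervalIntegral.integral_of_le hx.1, ← integral_Ico_eq_integral_Ioc]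
    exact setIntegral_eq_zero_of_forall_eq_zero fun z hz => by
      rw [min_eq_right (hneg z hz.2), sub_self]
  have h2 : ∫ z in x..M, -(min 0 (slack p T y z)) = 0 := by
    rw [intervalIntegral.integral_of_le hx.2]
    exact setIntegral_eq_zero_of_forall_eq_zero fun z hz => by
      rw [min_eq_left (hpos z hz.1.le), neg_zero]
  linarith

lemma potFst_continuous {p : ℝ} (hp : 1 < p) {T : ℝ → ℝ} (hT : Monotone T) (M : ℝ) :
    Continuous (potFst p M T) :=
  intervalIntegral.continuous_primitive (costDeriv_intervalIntegrable hp hT) _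

lemma potSnd_integral_antitone {p : ℝ} (hp : 1 < p) {T : ℝ → ℝ} (hT : Monotone T) {M : ℝ}
    (hM : 0 ≤ M) : Antitone fun y => ∫ z in (-M)..M, min 0 (slack p T y z) := by
  intro y y' hy
  refine intervalIntegral.integral_mono_on (by linarith)
    (min_slack_intervalIntegrable hp hT _ _ _) (min_slack_intervalIntegrable hp hT _ _ _)
    fun z _ => min_le_min_left _ (sub_le_sub_right ?_ _)
  exact (costDeriv_strictMono hp).monotone (by linarith)

lemma cost_continuous {p : ℝ} (hp : 1 < p) : Continuous fun z : ℝ => |z| ^ p :=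
  continuous_abs.rpow_const fun _ => Or.inr (by linarith)

lemma potSnd_measurable {p : ℝ} (hp : 1 < p) {T : ℝ → ℝ} (hT : Monotone T) {M : ℝ}
    (hM : 0 ≤ M) : Measurable (potSnd p M T) :=
  ((cost_continuous hp).comp (continuous_sub_left (-M))).measurable.add
    (potSnd_integral_antitone hp hT hM).measurable

lemma continuous_bounded_Icc {f : ℝ → ℝ} (hf : Continuous f) (M : ℝ) :
    ∃ C, ∀ y ∈ Icc (-M) M, |f y| ≤ C :=
  isCompact_Icc.exists_bound_of_continuousOn hf.continuousOn

lemma potSnd_bounded {p : ℝ} (hp : 1 < p) {T : ℝ → ℝ} (hT : Monotone T) {M : ℝ}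
    (hM : 0 ≤ M) : ∃ C, ∀ y ∈ Icc (-M) M, |potSnd p M T y| ≤ C := by
  obtain ⟨C, hC⟩ := continuous_bounded_Icc ((cost_continuous hp).comp (continuous_sub_left (-M))) M
  have hanti := potSnd_integral_antitone hp hT hM
  set G := fun y => ∫ z in (-M)..M, min 0 (slack p T y z) with hG
  refine ⟨C + (|G (-M)| + |G M|), fun y hy => (abs_add_le _ _).trans (add_le_add (hC y hy) ?_)⟩
  have h1 := hanti hy.1
  have h2 := hanti hy.2
  rw [abs_le]
  constructor
  · linarith [neg_abs_le (G M), abs_nonneg (G (-M))]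
  · linarith [le_abs_self (G (-M)), abs_nonneg (G M)]

/-! ### The increasing rearrangement -/

/-- The distribution function of `f` on `[0,1]`, whose generalized inverse is `rearr f`. -/
noncomputable def distFn (f : ℝ → ℝ) (y : ℝ) : ℝ :=
  (volume (Icc (0:ℝ) 1 ∩ {u : ℝ | f u ≤ y})).toReal

lemma distFn_eq_cdf {f : ℝ → ℝ} (hf : Measurable f) (y : ℝ) :
    distFn f y = ProbabilityTheory.cdf ((volume.restrict (Icc (0:ℝ) 1)).map f) y := by
  have : IsProbabilityMeasure (volume.restrict (Icc (0:ℝ) 1)) := ⟨by simp⟩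
  have := Measure.isProbabilityMeasure_map (μ := volume.restrict (Icc (0:ℝ) 1)) hf.aemeasurable
  rw [ProbabilityTheory.cdf_eq_real, measureReal_def, Measure.map_apply hf measurableSet_Iic,
    Measure.restrict_apply (hf measurableSet_Iic), inter_comm]
  rfl

lemma distFn_mono {f : ℝ → ℝ} (hf : Measurable f) : Monotone (distFn f) := by
  intro a b hab
  rw [distFn_eq_cdf hf, distFn_eq_cdf hf]
  exact ProbabilityTheory.monotone_cdf _ hab

lemma distFn_nonneg (f : ℝ → ℝ) (y : ℝ) : 0 ≤ distFn f y := ENNReal.toReal_nonneg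

lemma distFn_le_one {f : ℝ → ℝ} (hf : Measurable f) (y : ℝ) : distFn f y ≤ 1 := by
  rw [distFn_eq_cdf hf]
  exact ProbabilityTheory.cdf_le_one _ _

lemma distFn_top {f : ℝ → ℝ} {M : ℝ} (hfM : ∀ x ∈ Icc (0:ℝ) 1, f x ∈ Icc (-M) M) :
    distFn f M = 1 := by
  have : Icc (0:ℝ) 1 ∩ {u : ℝ | f u ≤ M} = Icc 0 1 :=
    inter_eq_left.2 fun x hx => (hfM x hx).2
  simp [distFn, this]

lemma distFn_bot {f : ℝ → ℝ} {M y : ℝ} (hfM : ∀ x ∈ Icc (0:ℝ) 1, f x ∈ Icc (-M) M)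
    (hy : y < -M) : distFn f y = 0 := by
  have : Icc (0:ℝ) 1 ∩ {u : ℝ | f u ≤ y} = ∅ := by
    ext x
    simp only [mem_inter_iff, mem_ofPred_eq, mem_empty_iff_false, iff_false, not_and, not_le]
    exact fun hx => hy.trans_le (hfM x hx).1
  simp [distFn, this]

/-- Galois connection between the quantile function and the distribution function. The level
`r = 0` is excluded: there the set in `rearr` is all of `ℝ` and the infimum is a junk value. -/
lemma rearr_le_iff {f : ℝ → ℝ} (hf : Measurable f) {M : ℝ}
    (hfM : ∀ x ∈ Icc (0:ℝ) 1, f x ∈ Icc (-M) M) {r : ℝ} (hr : r ∈ Ioc (0:ℝ) 1) (y : ℝ) :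
    rearr f r ≤ y ↔ r ≤ distFn f y := by
  have hbdd : BddBelow {y : ℝ | r ≤ distFn f y} := by
    refine ⟨-M, fun y hy => ?_⟩
    by_contra! h
    rw [mem_ofPred_eq, distFn_bot hfM h] at hy
    linarith [hr.1]
  have hne : {y : ℝ | r ≤ distFn f y}.Nonempty := ⟨M, by
    rw [mem_ofPred_eq, distFn_top hfM]
    exact hr.2⟩
  -- right continuity of the distribution function makes the infimum a minimum
  have hmem : r ≤ distFn f (rearr f r) := by
    have hc : Tendsto (distFn f) (𝓝[>] (rearr f r)) (𝓝 (distFn f (rearr f r))) := by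
      have h := ((ProbabilityTheory.cdf ((volume.restrict (Icc (0:ℝ) 1)).map f)).right_continuous
        (rearr f r)).mono Ioi_subset_Ici_self
      have he : distFn f = ProbabilityTheory.cdf ((volume.restrict (Icc (0:ℝ) 1)).map f) :=
        funext (distFn_eq_cdf hf)
      rw [he]
      exact h
    refine ge_of_tendsto hc ?_
    filter_upwards [self_mem_nhdsWithin] with z hz
    obtain ⟨w, hw, hwz⟩ := (csInf_lt_iff hbdd hne).1 (show sInf _ < z from hz)
    exact le_trans hw (distFn_mono hf hwz.le)
  exact ⟨fun h => hmem.trans (distFn_mono hf h), fun h => csInf_le hbdd h⟩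

lemma rearr_mem {f : ℝ → ℝ} (hf : Measurable f) {M : ℝ}
    (hfM : ∀ x ∈ Icc (0:ℝ) 1, f x ∈ Icc (-M) M) {r : ℝ} (hr : r ∈ Ioc (0:ℝ) 1) :
    rearr f r ∈ Icc (-M) M := by
  constructor
  · by_contra! h
    have := (rearr_le_iff hf hfM hr _).1 le_rfl
    rw [distFn_bot hfM h] at this
    linarith [hr.1]
  · rw [rearr_le_iff hf hfM hr, distFn_top hfM]
    exact hr.2

lemma rearr_monotoneOn {f : ℝ → ℝ} (hf : Measurable f) {M : ℝ}
    (hfM : ∀ x ∈ Icc (0:ℝ) 1, f x ∈ Icc (-M) M) : MonotoneOn (rearr f) (Ioc (0:ℝ) 1) := by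
  intro r hr s hs hrs
  rw [rearr_le_iff hf hfM hr]
  exact hrs.trans ((rearr_le_iff hf hfM hs _).1 le_rfl)

lemma rearr_aemeasurable {f : ℝ → ℝ} (hf : Measurable f) {M : ℝ}
    (hfM : ∀ x ∈ Icc (0:ℝ) 1, f x ∈ Icc (-M) M) :
    AEMeasurable (rearr f) (volume.restrict (Ioc (0:ℝ) 1)) :=
  aemeasurable_restrict_of_monotoneOn measurableSet_Ioc (rearr_monotoneOn hf hfM)

/-- Equimeasurability of a function and its increasing rearrangement. -/
lemma map_rearr {f : ℝ → ℝ} (hf : Measurable f) {M : ℝ}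
    (hfM : ∀ x ∈ Icc (0:ℝ) 1, f x ∈ Icc (-M) M) :
    (volume.restrict (Ioc (0:ℝ) 1)).map (rearr f) = (volume.restrict (Icc (0:ℝ) 1)).map f := by
  refine Measure.ext_of_Iic _ _ fun y => ?_
  rw [Measure.map_apply_of_aemeasurable (rearr_aemeasurable hf hfM) measurableSet_Iic,
    Measure.map_apply hf measurableSet_Iic, Measure.restrict_apply (hf measurableSet_Iic),
    Measure.restrict_apply' measurableSet_Ioc]
  have h1 : rearr f ⁻¹' Iic y ∩ Ioc (0:ℝ) 1 = Ioc 0 (distFn f y) := by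
    ext r
    constructor
    · rintro ⟨h, hr⟩
      exact ⟨hr.1, (rearr_le_iff hf hfM hr y).1 h⟩
    · intro hr
      have hr' : r ∈ Ioc (0:ℝ) 1 := ⟨hr.1, hr.2.trans (distFn_le_one hf y)⟩
      exact ⟨(rearr_le_iff hf hfM hr' y).2 hr.2, hr'⟩
  rw [h1, Real.volume_Ioc, sub_zero, distFn, ENNReal.ofReal_toReal, inter_comm]
  · rfl
  · exact ((measure_mono inter_subset_left).trans_lt measure_Icc_lt_top).ne

lemma integral_rearr {f : ℝ → ℝ} (hf : Measurable f) {M : ℝ}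
    (hfM : ∀ x ∈ Icc (0:ℝ) 1, f x ∈ Icc (-M) M) {φ : ℝ → ℝ} (hφ : Measurable φ) :
    ∫ x in Ioc (0:ℝ) 1, φ (rearr f x) = ∫ x in Icc (0:ℝ) 1, φ (f x) := by
  rw [← integral_map (rearr_aemeasurable hf hfM) hφ.aestronglyMeasurable, map_rearr hf hfM,
    integral_map hf.aemeasurable hφ.aestronglyMeasurable]

/-- The monotone transport map from the law of `u` to that of `l`. Below the range of `u` it is
set to the lower bound `-M`, since `rearr l 0` is a junk value. -/
noncomputable def transport (u l : ℝ → ℝ) (M z : ℝ) : ℝ :=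
  if distFn u z ≤ 0 then -M else rearr l (distFn u z)

lemma transport_le {u l : ℝ → ℝ} (hl : Measurable l) {M : ℝ}
    (hlM : ∀ x ∈ Icc (0:ℝ) 1, l x ∈ Icc (-M) M) {r z : ℝ} (hr : r ∈ Ioc (0:ℝ) 1)
    (hz : distFn u z ≤ r) : transport u l M z ≤ rearr l r := by
  rw [transport]
  split_ifs with h
  · exact (rearr_mem hl hlM hr).1
  · exact rearr_monotoneOn hl hlM ⟨not_le.1 h, hz.trans hr.2⟩ hr hz

lemma le_transport {u l : ℝ → ℝ} (hu : Measurable u) (hl : Measurable l) {M : ℝ}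
    (hlM : ∀ x ∈ Icc (0:ℝ) 1, l x ∈ Icc (-M) M) {r z : ℝ} (hr : r ∈ Ioc (0:ℝ) 1)
    (hz : r ≤ distFn u z) : rearr l r ≤ transport u l M z := by
  have h : 0 < distFn u z := hr.1.trans_le hz
  rw [transport, if_neg (not_le.2 h)]
  exact rearr_monotoneOn hl hlM hr ⟨h, distFn_le_one hu z⟩ hz

lemma transport_monotone {u l : ℝ → ℝ} (hu : Measurable u) (hl : Measurable l) {M : ℝ}
    (hlM : ∀ x ∈ Icc (0:ℝ) 1, l x ∈ Icc (-M) M) : Monotone (transport u l M) := by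
  intro z w hzw
  by_cases h : distFn u w ≤ 0
  · rw [transport, transport, if_pos h, if_pos ((distFn_mono hu hzw).trans h)]
  · have hr : distFn u w ∈ Ioc (0:ℝ) 1 := ⟨not_le.1 h, distFn_le_one hu w⟩
    exact (transport_le hl hlM hr (distFn_mono hu hzw)).trans (le_transport hu hl hlM hr le_rfl)

lemma potentials_eq_cost_rearr {p : ℝ} (hp : 1 < p) {u l : ℝ → ℝ} (hu : Measurable u)
    (hl : Measurable l) {M : ℝ} (huM : ∀ x ∈ Icc (0:ℝ) 1, u x ∈ Icc (-M) M)
    (hlM : ∀ x ∈ Icc (0:ℝ) 1, l x ∈ Icc (-M) M) {r : ℝ} (hr : r ∈ Ioc (0:ℝ) 1) :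
    potFst p M (transport u l M) (rearr u r) + potSnd p M (transport u l M) (rearr l r) =
      |rearr u r - rearr l r| ^ p := by
  refine potentials_eq_cost hp (transport_monotone hu hl hlM) (rearr_mem hu huM hr) ?_ ?_
  · intro z hz
    refine transport_le hl hlM hr (not_lt.1 fun h => ?_)
    exact hz.not_ge ((rearr_le_iff hu huM hr z).2 h.le)
  · intro z hz
    exact le_transport hu hl hlM hr ((rearr_le_iff hu huM hr z).1 hz)

lemma integrable_of_bounded_Icc {f φ : ℝ → ℝ} (hf : Measurable f) {M : ℝ}
    (hfM : ∀ x ∈ Icc (0:ℝ) 1, f x ∈ Icc (-M) M) (hφ : Measurable φ)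
    (hb : ∃ C, ∀ y ∈ Icc (-M) M, |φ y| ≤ C) :
    IntegrableOn (fun x => φ (f x)) (Icc (0:ℝ) 1) := by
  obtain ⟨C, hC⟩ := hb
  refine Measure.integrableOn_of_bounded (M := C) measure_Icc_lt_top.ne
    (hφ.comp hf).aestronglyMeasurable ?_
  filter_upwards [ae_restrict_mem measurableSet_Icc] with x hx
  exact hC _ (hfM x hx)

lemma integrable_rearr {f φ : ℝ → ℝ} (hf : Measurable f) {M : ℝ}
    (hfM : ∀ x ∈ Icc (0:ℝ) 1, f x ∈ Icc (-M) M) (hφ : Measurable φ)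
    (hb : ∃ C, ∀ y ∈ Icc (-M) M, |φ y| ≤ C) :
    IntegrableOn (fun x => φ (rearr f x)) (Ioc (0:ℝ) 1) := by
  obtain ⟨C, hC⟩ := hb
  refine Integrable.of_bound
    (hφ.comp_aemeasurable (rearr_aemeasurable hf hfM)).aestronglyMeasurable C ?_
  filter_upwards [ae_restrict_mem measurableSet_Ioc] with x hx
  exact hC _ (rearr_mem hf hfM hx)

/-! ### Length reduction -/

/-- If a nonnegative `g` satisfies `η ≤ g x + g x'` across two disjoint sets of measure at least
`δ`, then its integral is at least `δ * η`: with `m` the infimum of `g` on the first set,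
`g ≥ η - m` on the second. -/
lemma mul_le_integral_of_pairs {g : ℝ → ℝ} {I A B : Set ℝ} (hI : MeasurableSet I)
    (hIfin : volume I ≠ ⊤) (hg : IntegrableOn g I) (hg0 : ∀ x ∈ I, 0 ≤ g x)
    (hA : MeasurableSet A) (hB : MeasurableSet B) (hAI : A ⊆ I) (hBI : B ⊆ I)
    (hAB : Disjoint A B) {δ η : ℝ} (hδ : 0 < δ) (hAδ : δ ≤ volume.real A)
    (hBδ : δ ≤ volume.real B) (hpair : ∀ x ∈ A, ∀ x' ∈ B, η ≤ g x + g x') :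
    δ * η ≤ ∫ x in I, g x := by
  have hAne : A.Nonempty := by
    by_contra! h
    simp [h] at hAδ
    linarith
  have hlow : ∀ x ∈ A, 0 ≤ g x := fun x hx => hg0 x (hAI hx)
  set m := sInf (g '' A) with hm
  have hm0 : 0 ≤ m := Real.sInf_nonneg (by rintro _ ⟨x, hx, rfl⟩; exact hlow x hx)
  have hmA : ∀ x ∈ A, m ≤ g x := fun x hx =>
    csInf_le ⟨0, by rintro _ ⟨x, hx, rfl⟩; exact hlow x hx⟩ (mem_image_of_mem g hx)
  have hmB : ∀ x ∈ B, max (η - m) 0 ≤ g x := by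
    intro x hx
    refine max_le ?_ (hg0 x (hBI hx))
    have : η - g x ≤ m := le_csInf (hAne.image g) (by
      rintro _ ⟨y, hy, rfl⟩
      linarith [hpair y hy x hx])
    linarith
  have hfin : ∀ {S : Set ℝ}, S ⊆ I → volume S ≠ ⊤ := fun h => measure_ne_top_of_subset h hIfin
  have h1 := setIntegral_ge_of_const_le_real hA (hfin hAI) hmA (hg.mono_set hAI)
  have h2 := setIntegral_ge_of_const_le_real hB (hfin hBI) hmB (hg.mono_set hBI)
  have h3 := setIntegral_union hAB hB (hg.mono_set hAI) (hg.mono_set hBI)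
  have h4 : ∫ x in A ∪ B, g x ≤ ∫ x in I, g x := by
    refine setIntegral_mono_set hg ?_ (LE.le.eventuallyLE (union_subset hAI hBI))
    filter_upwards [ae_restrict_mem hI] with x hx using hg0 x hx
  have h5 : m * δ ≤ m * volume.real A := mul_le_mul_of_nonneg_left hAδ hm0
  have h6 : max (η - m) 0 * δ ≤ max (η - m) 0 * volume.real B :=
    mul_le_mul_of_nonneg_left hBδ (le_max_right _ _)
  have h7 : (η - m) * δ ≤ max (η - m) 0 * δ := mul_le_mul_of_nonneg_right (le_max_left _ _) hδ.le
  nlinarith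

/-- The length reduction on the measurable sets cut out by thresholds `a` for `l` and `b` for `u`.
The duality gaps at two crossing points `x`, `x'` add up to at least `η`, because the dual
constraint also holds at the uncrossed pairs `(u x, l x')` and `(u x', l x)`. -/
lemma length_reduction_of_thresholds {p : ℝ} (hp : 1 < p) {u l : ℝ → ℝ} (hu : Measurable u)
    (hl : Measurable l) {M : ℝ} (hM : 0 ≤ M) (huM : ∀ x ∈ Icc (0:ℝ) 1, u x ∈ Icc (-M) M)
    (hlM : ∀ x ∈ Icc (0:ℝ) 1, l x ∈ Icc (-M) M) {a b ε δ η : ℝ} (hε : 0 < ε) (hδ : 0 < δ)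
    (hA : δ ≤ volume.real (Icc (0:ℝ) 1 ∩ ({x | a ≤ l x} ∩ {x | u x ≤ b})))
    (hB : δ ≤ volume.real (Icc (0:ℝ) 1 ∩ ({x | l x ≤ a - ε} ∩ {x | b + ε ≤ u x})))
    (hη : ∀ x ∈ Icc (0:ℝ) 1, ∀ x' ∈ Icc (0:ℝ) 1, u x + ε ≤ u x' → l x' + ε ≤ l x →
      η ≤ |u x - l x| ^ p + |u x' - l x'| ^ p - |u x - l x'| ^ p - |u x' - l x| ^ p) :
    (∫ x in Icc (0:ℝ) 1, |rearr u x - rearr l x| ^ p) ≤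
      (∫ x in Icc (0:ℝ) 1, |u x - l x| ^ p) - δ * η := by
  set T := transport u l M with hTdef
  have hT : Monotone T := transport_monotone hu hl hlM
  have hφm : Measurable (potFst p M T) := (potFst_continuous hp hT M).measurable
  have hφb := continuous_bounded_Icc (potFst_continuous hp hT M) M
  have hψm : Measurable (potSnd p M T) := potSnd_measurable hp hT hM
  have hψb := potSnd_bounded hp hT hM
  have hφi := integrable_of_bounded_Icc hu huM hφm hφb
  have hψi := integrable_of_bounded_Icc hl hlM hψm hψb
  have hstar : (∫ x in Icc (0:ℝ) 1, |rearr u x - rearr l x| ^ p) =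
      (∫ x in Icc (0:ℝ) 1, potFst p M T (u x)) + ∫ x in Icc (0:ℝ) 1, potSnd p M T (l x) := by
    rw [integral_Icc_eq_integral_Ioc, ← integral_rearr hu huM hφm, ← integral_rearr hl hlM hψm,
      ← integral_add (integrable_rearr hu huM hφm hφb) (integrable_rearr hl hlM hψm hψb)]
    exact setIntegral_congr_fun measurableSet_Ioc fun r hr =>
      (potentials_eq_cost_rearr hp hu hl huM hlM hr).symm
  have hci : IntegrableOn (fun x => |u x - l x| ^ p) (Icc (0:ℝ) 1) := by
    refine integrable_of_bounded_Icc (M := 2 * M) (hu.sub hl) (fun x hx => ?_)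
      (cost_continuous hp).measurable (continuous_bounded_Icc (cost_continuous hp) _)
    have h1 := huM x hx
    have h2 := hlM x hx
    exact ⟨by simp only [Pi.sub_apply]; linarith [h1.1, h2.2],
      by simp only [Pi.sub_apply]; linarith [h1.2, h2.1]⟩
  have hgi := (hci.sub hφi).sub hψi
  have hgint : ∫ x in Icc (0:ℝ) 1,
      (|u x - l x| ^ p - potFst p M T (u x) - potSnd p M T (l x)) =
      (∫ x in Icc (0:ℝ) 1, |u x - l x| ^ p) - (∫ x in Icc (0:ℝ) 1, potFst p M T (u x)) -
        ∫ x in Icc (0:ℝ) 1, potSnd p M T (l x) := by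
    rw [← integral_sub hci hφi]
    exact integral_sub (hci.sub hφi) hψi
  have hdual := fun {x x' : ℝ} (hx : x ∈ Icc (0:ℝ) 1) =>
    potentials_le_cost hp hT (huM x hx) (l x')
  have hmain := mul_le_integral_of_pairs
    (g := fun x => |u x - l x| ^ p - potFst p M T (u x) - potSnd p M T (l x))
    measurableSet_Icc measure_Icc_lt_top.ne hgi (fun x hx => by linarith [hdual (x' := x) hx])
    (measurableSet_Icc.inter ((measurableSet_le measurable_const hl).inter
      (measurableSet_le hu measurable_const)))
    (measurableSet_Icc.inter ((measurableSet_le hl measurable_const).inter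
      (measurableSet_le measurable_const hu)))
    inter_subset_left inter_subset_left ?_ hδ hA hB (η := η) ?_
  · linarith
  · rw [Set.disjoint_left]
    rintro x ⟨-, h1, -⟩ ⟨-, h2, -⟩
    simp only [mem_ofPred_eq] at h1 h2
    linarith
  · rintro x ⟨hx, h1, h2⟩ x' ⟨hx', h3, h4⟩
    simp only [mem_ofPred_eq] at h1 h2 h3 h4
    have h := hη x hx x' hx' (by linarith) (by linarith)
    have e1 := hdual (x' := x') hx
    have e2 := hdual (x' := x) hx'
    linarith

/-- The length reduction for arbitrary (possibly non-measurable) sets `X`, `X'`, on which `l` and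
`u` are enclosed by thresholds. -/
lemma length_reduction_of_sets {p : ℝ} (hp : 1 < p) {u l : ℝ → ℝ} (hu : Measurable u)
    (hl : Measurable l) {M : ℝ} (hM : 0 ≤ M) (huM : ∀ x ∈ Icc (0:ℝ) 1, u x ∈ Icc (-M) M)
    (hlM : ∀ x ∈ Icc (0:ℝ) 1, l x ∈ Icc (-M) M) {ε δ η : ℝ} (hε : 0 < ε) (hδ : 0 < δ)
    {X X' : Set ℝ} (hX : X ⊆ Icc (0:ℝ) 1) (hX' : X' ⊆ Icc (0:ℝ) 1)
    (hXne : X.Nonempty) (hδX : δ ≤ (volume X).toReal) (hδX' : δ ≤ (volume X').toReal)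
    (hviol : ∀ x ∈ X, ∀ x' ∈ X', l x' + ε < l x ∧ u x + ε < u x')
    (hη : ∀ x ∈ Icc (0:ℝ) 1, ∀ x' ∈ Icc (0:ℝ) 1, u x + ε ≤ u x' → l x' + ε ≤ l x →
      η ≤ |u x - l x| ^ p + |u x' - l x'| ^ p - |u x - l x'| ^ p - |u x' - l x| ^ p) :
    (∫ x in Icc (0:ℝ) 1, |rearr u x - rearr l x| ^ p) ≤
      (∫ x in Icc (0:ℝ) 1, |u x - l x| ^ p) - δ * η := by
  have hbelow : BddBelow (l '' X) := ⟨-M, by rintro _ ⟨x, hx, rfl⟩; exact (hlM x (hX hx)).1⟩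
  have habove : BddAbove (u '' X) := ⟨M, by rintro _ ⟨x, hx, rfl⟩; exact (huM x (hX hx)).2⟩
  have hmono : ∀ {S S' : Set ℝ}, S ⊆ Icc (0:ℝ) 1 → S ⊆ S' → δ ≤ (volume S).toReal →
      δ ≤ volume.real (Icc (0:ℝ) 1 ∩ S') := fun h h' hS =>
    hS.trans (measureReal_mono (subset_inter h h')
      (measure_ne_top_of_subset inter_subset_left measure_Icc_lt_top.ne))
  refine length_reduction_of_thresholds hp hu hl hM huM hlM (a := sInf (l '' X))
    (b := sSup (u '' X)) hε hδ (hmono hX (fun x hx => ?_) hδX) (hmono hX' (fun x' hx' => ?_) hδX')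
    hη
  · exact ⟨csInf_le hbelow (mem_image_of_mem l hx), le_csSup habove (mem_image_of_mem u hx)⟩
  · have h1 : l x' + ε ≤ sInf (l '' X) := le_csInf (hXne.image l) (by
      rintro _ ⟨x, hx, rfl⟩
      exact (hviol x hx x' hx').1.le)
    have h2 : sSup (u '' X) ≤ u x' - ε := csSup_le (hXne.image u) (by
      rintro _ ⟨x, hx, rfl⟩
      linarith [(hviol x hx x' hx').2])
    exact ⟨by simp only [mem_ofPred_eq]; linarith, by simp only [mem_ofPred_eq]; linarith⟩

/-- The values whose infimum is the constant `η_p`. -/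
def uncrossGains (K : Set ℝ) (ε p : ℝ) : Set ℝ :=
  {r : ℝ | ∃ v v' t t' : ℝ, v ∈ K ∧ v' ∈ K ∧ t ∈ K ∧ t' ∈ K ∧ v + ε ≤ v' ∧ t + ε ≤ t' ∧
    r = |v - t'| ^ p + |v' - t| ^ p - |v - t| ^ p - |v' - t'| ^ p}

lemma uncrossGains_pos {K : Set ℝ} {ε p r : ℝ} (hε : 0 < ε) (hp : 1 < p)
    (hr : r ∈ uncrossGains K ε p) : 0 < r := by
  obtain ⟨v, v', t, t', -, -, -, -, hv, ht, rfl⟩ := hr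
  exact cost_uncross_lt hp (by linarith) (by linarith)

lemma isCompact_uncrossGains {K : Set ℝ} (hK : IsCompact K) (ε : ℝ) {p : ℝ} (hp : 1 < p) :
    IsCompact (uncrossGains K ε p) := by
  have hc := cost_continuous hp
  have hcomp : IsCompact ((K ×ˢ K ×ˢ K ×ˢ K) ∩
      {q : ℝ × ℝ × ℝ × ℝ | q.1 + ε ≤ q.2.1 ∧ q.2.2.1 + ε ≤ q.2.2.2}) := by
    refine (hK.prod (hK.prod (hK.prod hK))).inter_right ?_
    have h1 : IsClosed {q : ℝ × ℝ × ℝ × ℝ | q.1 + ε ≤ q.2.1} :=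
      isClosed_le (by fun_prop) (by fun_prop)
    have h2 : IsClosed {q : ℝ × ℝ × ℝ × ℝ | q.2.2.1 + ε ≤ q.2.2.2} :=
      isClosed_le (by fun_prop) (by fun_prop)
    exact h1.inter h2
  have hcont : Continuous fun q : ℝ × ℝ × ℝ × ℝ =>
      |q.1 - q.2.2.2| ^ p + |q.2.1 - q.2.2.1| ^ p - |q.1 - q.2.2.1| ^ p -
        |q.2.1 - q.2.2.2| ^ p := by
    have h : ∀ f : ℝ × ℝ × ℝ × ℝ → ℝ, Continuous f → Continuous fun q => |f q| ^ p :=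
      fun f hf => hc.comp hf
    exact (((h _ (by fun_prop)).add (h _ (by fun_prop))).sub (h _ (by fun_prop))).sub
      (h _ (by fun_prop))
  convert hcomp.image hcont using 1
  ext r
  constructor
  · rintro ⟨v, v', t, t', h1, h2, h3, h4, h5, h6, rfl⟩
    exact ⟨(v, v', t, t'), ⟨⟨h1, h2, h3, h4⟩, h5, h6⟩, rfl⟩
  · rintro ⟨⟨v, v', t, t'⟩, ⟨⟨h1, h2, h3, h4⟩, h5, h6⟩, rfl⟩
    exact ⟨v, v', t, t', h1, h2, h3, h4, h5, h6, rfl⟩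

/-- Strict length reduction of rearranged confidence bands, univariate case:
if the endpoint functions are strictly non-comonotonic on sets of measure ≥ δ,
the `L^p` length strictly decreases by at least `δ·η_p`, for `p ∈ (1,∞)`. -/
theorem rearranged_band_strictly_shorter (K : Set ℝ) (hK : IsCompact K)
    (l u : ℝ → ℝ) (hlm : Measurable l) (hum : Measurable u)
    (hlK : ∀ x ∈ Set.Icc (0:ℝ) 1, l x ∈ K)
    (huK : ∀ x ∈ Set.Icc (0:ℝ) 1, u x ∈ K)
    (hle : ∀ x ∈ Set.Icc (0:ℝ) 1, l x ≤ u x)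
    (X₀ X₀' : Set ℝ) (hX₀ : X₀ ⊆ Set.Icc (0:ℝ) 1) (hX₀' : X₀' ⊆ Set.Icc (0:ℝ) 1)
    (δ : ℝ) (hδ : 0 < δ)
    (hmX₀ : δ ≤ (volume X₀).toReal) (hmX₀' : δ ≤ (volume X₀').toReal)
    (hlt : ∀ x ∈ X₀, ∀ x' ∈ X₀', x < x')
    (ε : ℝ) (hε : 0 < ε)
    (hviol :
      (∀ x ∈ X₀, ∀ x' ∈ X₀', l x' + ε < l x ∧ u x + ε < u x') ∨
      (∀ x ∈ X₀, ∀ x' ∈ X₀', l x + ε < l x' ∧ u x' + ε < u x))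
    (p : ℝ) (hp : 1 < p) :
    0 < sInf {r : ℝ | ∃ v v' t t' : ℝ, v ∈ K ∧ v' ∈ K ∧ t ∈ K ∧ t' ∈ K ∧
        v + ε ≤ v' ∧ t + ε ≤ t' ∧
        r = |v - t'| ^ p + |v' - t| ^ p - |v - t| ^ p - |v' - t'| ^ p} ∧
      (∫ x in Set.Icc (0:ℝ) 1, |rearr u x - rearr l x| ^ p) ≤
        (∫ x in Set.Icc (0:ℝ) 1, |u x - l x| ^ p) -
          δ * sInf {r : ℝ | ∃ v v' t t' : ℝ, v ∈ K ∧ v' ∈ K ∧ t ∈ K ∧ t' ∈ K ∧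
            v + ε ≤ v' ∧ t + ε ≤ t' ∧
            r = |v - t'| ^ p + |v' - t| ^ p - |v - t| ^ p - |v' - t'| ^ p} := by
  change 0 < sInf (uncrossGains K ε p) ∧ _ ≤ _ - δ * sInf (uncrossGains K ε p)
  have hne : ∀ {X : Set ℝ}, δ ≤ (volume X).toReal → X.Nonempty := by
    intro X h
    by_contra! hX
    simp only [hX, measure_empty, ENNReal.toReal_zero] at h
    linarith
  obtain ⟨M, hKM⟩ : ∃ M, ∀ x ∈ K, x ∈ Icc (-M) M := by
    obtain ⟨M, hM⟩ := hK.isBounded.subset_closedBall 0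
    refine ⟨M, fun x hx => ?_⟩
    have := hM hx
    rwa [Real.closedBall_eq_Icc, zero_sub, zero_add] at this
  have hM : 0 ≤ M := by
    have h := hKM _ (hlK 0 (by simp))
    linarith [h.1, h.2]
  have hgain : ∀ x ∈ Icc (0:ℝ) 1, ∀ x' ∈ Icc (0:ℝ) 1, u x + ε ≤ u x' → l x' + ε ≤ l x →
      |u x - l x| ^ p + |u x' - l x'| ^ p - |u x - l x'| ^ p - |u x' - l x| ^ p ∈
        uncrossGains K ε p := fun x hx x' hx' h1 h2 =>
    ⟨u x, u x', l x', l x, huK x hx, huK x' hx', hlK x' hx', hlK x hx, h1, h2, rfl⟩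
  have hSne : (uncrossGains K ε p).Nonempty := by
    obtain ⟨x, hx⟩ := hne hmX₀
    obtain ⟨x', hx'⟩ := hne hmX₀'
    rcases hviol with h | h
    · exact ⟨_, hgain x (hX₀ hx) x' (hX₀' hx') (h x hx x' hx').2.le (h x hx x' hx').1.le⟩
    · exact ⟨_, hgain x' (hX₀' hx') x (hX₀ hx) (h x hx x' hx').2.le (h x hx x' hx').1.le⟩
  have hη := fun x hx x' hx' h1 h2 => csInf_le
    (⟨0, fun r hr => (uncrossGains_pos hε hp hr).le⟩ : BddBelow (uncrossGains K ε p))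
    (hgain x hx x' hx' h1 h2)
  have huM := fun x hx => hKM _ (huK x hx)
  have hlM := fun x hx => hKM _ (hlK x hx)
  refine ⟨uncrossGains_pos hε hp ((isCompact_uncrossGains hK ε hp).sInf_mem hSne), ?_⟩
  -- the two cases differ only by the roles of the two sets
  rcases hviol with h | h
  · exact length_reduction_of_sets hp hum hlm hM huM hlM hε hδ hX₀ hX₀' (hne hmX₀) hmX₀ hmX₀' h hη
  · exact length_reduction_of_sets hp hum hlm hM huM hlM hε hδ hX₀' hX₀ (hne hmX₀') hmX₀' hmX₀
      (fun x' hx' x hx => h x hx x' hx') hη
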